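/- Let γ_1,…,γ_q be homogeneous polynomials of degree d in K[X_0,…,X_q] whose common zero locus in P^q is finite (zero-dimensional). For N ∈ ℕ let V_N denote the vector space of homogeneous polynomials of degree N, and for each q-tuple i⃗ = (i_1,…,i_q) of nonnegative integers with d·σ(i⃗) ≤ N (where σ(i⃗) = i_1+…+i_q), ordered lexicographically, set W_{i⃗} = Σ_{e⃗ ≥ i⃗} γ_1^{e_1}···γ_q^{e_q} V_{N − d·σ(e⃗)}. Then there exists an integer N_0, depending only on γ_1,…,γ_q, such that for all integers N > N_0 and all i⃗ with d·σ(i⃗) < N − N_0, the quotient has dimension Δ_{i⃗} := dim W_{i⃗}/W_{i⃗'} = d^q, where i⃗' is the immediate lexicographic successor of i⃗. -/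

import Mathlib

/-!
Adjoining to `γ₁, …, γ_q` a linear form `ℓ` that avoids their finitely many common zeros leaves
only the origin. The polynomial ring localized at the origin has depth `q + 1`, so `γ₁, …, γ_q, ℓ`
cut out its closed point with as many elements as the depth and hence form a regular sequence.
Regularity passes back from the localization to the polynomial ring because the `γ_j` are
homogeneous, and from the algebraic closure to `K` by faithful flatness.

For a regular sequence, `γ^i * g` lies in the ideal of lexicographically larger monomials if and
only if `g ∈ (γ)`, so multiplication by `γ^i` identifies the degree `N - d * σ(i)` part of
`K[X] / (γ)` with `W_i / W_{i'}`. Dividing by a regular element of degree `d` replaces a Hilbert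
function `H` by `n ↦ H n - H (n - d)`; doing so `q` times turns `(n + q).choose q` into the constant
`d ^ q` for `n ≥ q * d`, whence `N₀ = q * d`.
-/

open scoped BigOperators

/-- The subspace `W_{i⃗} = Σ_{e⃗ ≥ i⃗} γ_1^{e_1}···γ_q^{e_q} V_{N − d·σ(e⃗)}` of the space
`V_N` of homogeneous polynomials of degree `N`, where `e⃗` ranges over the tuples of
nonnegative integers which are `≥ i⃗` in the lexicographic order and satisfy
`d·σ(e⃗) ≤ N`. -/
noncomputable def filtW (K : Type) [Field K] (q d N : ℕ)
    (γ : Fin q → MvPolynomial (Fin (q + 1)) K) (i : Fin q → ℕ) :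
    Submodule K (MvPolynomial (Fin (q + 1)) K) :=
  ⨆ (e : Fin q → ℕ) (_ : toLex i ≤ toLex e) (_ : d * ∑ j, e j ≤ N),
    Submodule.map (LinearMap.mulLeft K (∏ j, γ j ^ e j))
      (MvPolynomial.homogeneousSubmodule (Fin (q + 1)) K (N - d * ∑ j, e j))

/-- The immediate successor of the tuple `i⃗` in the lexicographic order on `ℕ^q`
(first coordinate most significant): increment the last coordinate by one. -/
def lexSucc (q : ℕ) (hq : 1 ≤ q) (i : Fin q → ℕ) : Fin q → ℕ :=
  Function.update i ⟨q - 1, by omega⟩ (i ⟨q - 1, by omega⟩ + 1)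

section Depth

open RingTheory.Sequence IsLocalRing Module CategoryTheory CategoryTheory.Abelian ModuleCat
open scoped Pointwise

universe u

variable {R M : Type u} [CommRing R] [AddCommGroup M] [Module R M] [Module.Finite R M]

theorem coheight_eq_supportDim_quotient (P : PrimeSpectrum R) :
    (Order.coheight P : WithBot ℕ∞) = supportDim R (R ⧸ P.asIdeal) := by
  rw [supportDim_quotient_eq_ringKrullDim, ringKrullDim_quotient, Order.coheight_eq_krullDim_Ici]
  rfl

theorem support_quotSMulTop_inter_zeroLocus (f : R) (fs : List R) :
    support R (QuotSMulTop f M) ∩ PrimeSpectrum.zeroLocus {g | g ∈ fs} =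
      support R M ∩ PrimeSpectrum.zeroLocus {g | g ∈ f :: fs} := by
  rw [support_quotSMulTop, Set.inter_assoc, ← PrimeSpectrum.zeroLocus_union]
  congr 2
  ext g
  simp

variable [IsLocalRing R]

theorem maximalIdeal_smul_top_lt_top [Nontrivial M] :
    maximalIdeal R • (⊤ : Submodule R M) < ⊤ :=
  (Submodule.top_ne_ideal_smul_of_le_jacobson_annihilator
    (maximalIdeal_le_jacobson _)).symm.lt_top

variable [IsNoetherianRing R]

-- By Rees' theorem the length of regular sequences in the maximal ideal is governed by the
-- vanishing of `Ext`, and the long exact sequence for `f` shifts the degree by one.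
theorem exists_isRegular_quotSMulTop {n : ℕ}
    (h : ∃ rs : List R, rs.length = n + 1 ∧ (∀ r ∈ rs, r ∈ maximalIdeal R) ∧ IsRegular M rs)
    {f : R} (hfm : f ∈ maximalIdeal R) (hf : IsSMulRegular M f) :
    ∃ rs : List R, rs.length = n ∧ (∀ r ∈ rs, r ∈ maximalIdeal R) ∧
      IsRegular (QuotSMulTop f M) rs := by
  obtain ⟨_, _, _, hreg⟩ := id h
  have : Nontrivial M := hreg.nontrivial
  have := nontrivial_quotSMulTop_of_mem_maximalIdeal M hfm
  have hExt := ((exists_isRegular_tfae _ (n + 1) (.of R M)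
    (maximalIdeal_smul_top_lt_top (M := M))).out 3 1).1 h
  refine ((exists_isRegular_tfae _ n (.of R (QuotSMulTop f M))
    (maximalIdeal_smul_top_lt_top (M := QuotSMulTop f M))).out 1 3).1 fun i hi => ?_
  have hM := AddCommGrpCat.isZero_of_iff_subsingleton.2 (hExt i (by omega))
  have hM' := AddCommGrpCat.isZero_of_iff_subsingleton.2 (hExt (i + 1) (by omega))
  exact AddCommGrpCat.subsingleton_of_isZero <| ShortComplex.Exact.isZero_of_both_zeros
    (Ext.covariant_sequence_exact₃' _ (IsSMulRegular.smulShortComplex_shortExact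
      (M := .of R M) hf) i (i + 1) rfl)
    (hM.eq_zero_of_src _) (hM'.eq_zero_of_tgt _)

theorem exists_mem_associatedPrimes_quotSMulTop {y : R} (hy : IsSMulRegular M y)
    (hym : y ∈ maximalIdeal R) {P : Ideal R} (hP : P ∈ associatedPrimes R M) :
    ∃ Q ∈ associatedPrimes R (QuotSMulTop y M), P ≤ Q ∧ y ∈ Q := by
  obtain ⟨hPprime, v, hPv⟩ := isAssociatedPrime_iff.1 hP
  let N := Submodule.torsionBySet R M P
  have hN {u : M} : u ∈ N ↔ ∀ a ∈ P, a • u = 0 := by simp [N]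
  have hN0 : N ≠ ⊥ := fun h => hPprime.ne_top <| by
    have : v ∈ N := hN.2 fun a ha => by simpa [hPv] using ha
    have hv0 : v = 0 := by simpa [h] using this
    simp [hPv, hv0]
  obtain ⟨u, huN, huy⟩ : ∃ u ∈ N, u ∉ y • (⊤ : Submodule R M) := by
    by_contra! hNy
    refine hN0 (Submodule.eq_bot_of_le_smul_of_le_jacobson_bot _ N (IsNoetherian.noetherian N)
      (fun u hu => ?_) (maximalIdeal_le_jacobson ⊥))
    obtain ⟨w, -, rfl⟩ := hNy u hu
    refine Submodule.smul_mem_smul hym (hN.2 fun a ha => hy ?_)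
    simpa [smul_comm a y w] using hN.1 hu a ha
  obtain ⟨Q, hQ, hle⟩ := exists_le_isAssociatedPrime_of_isNoetherianRing (R := R)
    (Submodule.Quotient.mk u : QuotSMulTop y M) (by simpa using huy)
  have hmem {a : R} (ha : a • u ∈ y • (⊤ : Submodule R M)) : a ∈ Q :=
    hle (by simpa [← Submodule.Quotient.mk_smul] using ha)
  refine ⟨Q, hQ, fun a ha => hmem ?_, hmem (Submodule.smul_mem_pointwise_smul _ _ _ trivial)⟩
  rw [hN.1 huN a ha]
  exact zero_mem _

theorem length_le_coheight_of_mem_associatedPrimes {rs : List R}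
    (hrs : ∀ r ∈ rs, r ∈ maximalIdeal R) (hreg : IsRegular M rs)
    {P : PrimeSpectrum R} (hP : P.asIdeal ∈ associatedPrimes R M) :
    (rs.length : ℕ∞) ≤ Order.coheight P := by
  induction rs generalizing M P with
  | nil => simp
  | cons y rs ih =>
    obtain ⟨hy, hreg⟩ := (isRegular_cons_iff M y rs).1 hreg
    rw [List.forall_mem_cons] at hrs
    obtain ⟨Q, hQ, hPQ, hyQ⟩ := exists_mem_associatedPrimes_quotSMulTop hy hrs.1 hP
    have hyP : y ∉ P.asIdeal := fun hyP => by
      have : y ∈ {r : R | IsSMulRegular M r}ᶜ :=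
        biUnion_associatedPrimes_eq_compl_regular R M ▸ Set.mem_biUnion hP hyP
      exact this hy
    have hlt : P < ⟨Q, hQ.1⟩ := lt_of_le_not_ge hPQ fun hQP => hyP (hQP hyQ)
    calc ((y :: rs).length : ℕ∞) = rs.length + 1 := by simp
      _ ≤ Order.coheight (⟨Q, hQ.1⟩ : PrimeSpectrum R) + 1 := by gcongr; exact ih hrs.2 hreg hQ
      _ ≤ Order.coheight P := Order.coheight_add_one_le hlt

theorem supportDim_le_length {fs : List R} (hfs : ∀ f ∈ fs, f ∈ maximalIdeal R)
    (hsupp : support R M ∩ PrimeSpectrum.zeroLocus {f | f ∈ fs} ⊆ {closedPoint R}) :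
    supportDim R M ≤ fs.length := by
  induction fs generalizing M with
  | nil =>
    have : Subsingleton (support R M) :=
      (Set.subsingleton_singleton.anti (by simpa using hsupp)).coe_sort
    exact_mod_cast Order.krullDim_nonpos_of_subsingleton
  | cons f fs ih =>
    rw [List.forall_mem_cons] at hfs
    refine (supportDim_le_supportDim_quotSMulTop_succ (M := M) hfs.1).trans ?_
    rw [List.length_cons, Nat.cast_add_one]
    gcongr
    exact ih hfs.2 (by rwa [support_quotSMulTop_inter_zeroLocus])

theorem isWeaklyRegular_of_exists_isRegular {fs : List R} (hfs : ∀ f ∈ fs, f ∈ maximalIdeal R)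
    (hsupp : support R M ∩ PrimeSpectrum.zeroLocus {f | f ∈ fs} ⊆ {closedPoint R})
    (hdepth : ∃ rs : List R, rs.length = fs.length ∧ (∀ r ∈ rs, r ∈ maximalIdeal R) ∧
      IsRegular M rs) :
    IsWeaklyRegular M fs := by
  induction fs generalizing M with
  | nil => exact .nil R M
  | cons f fs ih =>
    rw [List.forall_mem_cons] at hfs
    have hf : IsSMulRegular M f := by
      by_contra hf
      have : f ∈ ⋃ P ∈ associatedPrimes R M, (P : Set R) := by
        rwa [biUnion_associatedPrimes_eq_compl_regular]
      obtain ⟨P, hP, hfP⟩ := Set.mem_iUnion₂.1 this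
      obtain ⟨rs, hlen, hrs, hreg⟩ := hdepth
      have hlower := length_le_coheight_of_mem_associatedPrimes hrs hreg (P := ⟨P, hP.1⟩) hP
      have hupper : supportDim R (R ⧸ P) ≤ fs.length := by
        refine supportDim_le_length hfs.2 fun Q ⟨hPQ, hfsQ⟩ => hsupp ?_
        rw [support_eq_zeroLocus, Ideal.annihilator_quotient] at hPQ
        rw [← support_quotSMulTop_inter_zeroLocus, support_quotSMulTop, support_eq_zeroLocus]
        have hannP : annihilator R M ≤ P :=
          Submodule.annihilator_top (R := R) (M := M) ▸ hP.annihilator_le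
        exact ⟨⟨hannP.trans hPQ, by simpa using hPQ hfP⟩, hfsQ⟩
      rw [← coheight_eq_supportDim_quotient ⟨P, hP.1⟩] at hupper
      have : (rs.length : ℕ∞) ≤ fs.length := hlower.trans (by exact_mod_cast hupper)
      rw [hlen, List.length_cons] at this
      exact absurd this (by norm_cast; omega)
    refine .cons hf (ih hfs.2 ?_ (exists_isRegular_quotSMulTop hdepth hfs.1 hf))
    rwa [support_quotSMulTop_inter_zeroLocus]

end Depth

section WeaklyRegular

open RingTheory.Sequence
open scoped Pointwise

variable {R S : Type*} [CommRing R] [CommRing S]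

theorem isWeaklyRegular_self_iff {rs : List R} :
    IsWeaklyRegular R rs ↔ ∀ (n : ℕ) (hn : n < rs.length) (u : R),
      rs[n] * u ∈ Ideal.ofList (rs.take n) → u ∈ Ideal.ofList (rs.take n) := by
  simp [isWeaklyRegular_iff, isSMulRegular_quotient_iff_mem_of_smul_mem]

theorem isWeaklyRegular_quotient_cons_iff {I : Ideal R} {f : R} {rs : List R} :
    IsWeaklyRegular (R ⧸ I) (f :: rs) ↔
      (∀ u, f * u ∈ I → u ∈ I) ∧ IsWeaklyRegular (R ⧸ (I ⊔ Ideal.span {f})) rs := by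
  have hmap : f • (⊤ : Submodule R (R ⧸ I)) =
      Submodule.map (Submodule.mkQ I) (Ideal.span {f}) := by
    rw [← Submodule.range_mkQ, LinearMap.range_eq_map, ← Submodule.ideal_span_singleton_smul,
      ← Submodule.map_smul'', smul_eq_mul, Ideal.mul_top]
  have e : QuotSMulTop f (R ⧸ I) ≃ₗ[R] R ⧸ (I ⊔ Ideal.span {f}) :=
    (Submodule.quotEquivOfEq _ _ hmap).trans
      (Submodule.quotientQuotientEquivQuotientSup I (Ideal.span {f}))
  rw [isWeaklyRegular_cons_iff, isSMulRegular_quotient_iff_mem_of_smul_mem,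
    e.isWeaklyRegular_congr]
  rfl

theorem isWeaklyRegular_quotient_bot_iff {rs : List R} :
    IsWeaklyRegular (R ⧸ (⊥ : Ideal R)) rs ↔ IsWeaklyRegular R rs :=
  (Submodule.quotEquivOfEqBot (⊥ : Ideal R) rfl).isWeaklyRegular_congr rs

theorem isWeaklyRegular_of_map (φ : R →+* S) {rs : List R}
    (hcomap : ∀ n, ((Ideal.ofList (rs.take n)).map φ).comap φ ≤ Ideal.ofList (rs.take n))
    (h : IsWeaklyRegular S (rs.map φ)) : IsWeaklyRegular R rs := by
  rw [isWeaklyRegular_self_iff] at h ⊢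
  refine fun n hn u hu => hcomap n ?_
  have := h n (by simpa using hn) (φ u)
  rw [← List.map_take, ← Ideal.map_ofList, List.getElem_map, ← map_mul] at this
  exact this (Ideal.mem_map_of_mem φ hu)

attribute [local instance] MvPolynomial.algebraMvPolynomial in
theorem isWeaklyRegular_of_map_algebraMap (K : Type*) {L σ : Type*} [Field K] [Field L]
    [Algebra K L] {rs : List (MvPolynomial σ K)}
    (h : IsWeaklyRegular (MvPolynomial σ L) (rs.map (MvPolynomial.map (algebraMap K L)))) :
    IsWeaklyRegular (MvPolynomial σ K) rs := by
  have : Module.Free (MvPolynomial σ K) (MvPolynomial σ L) :=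
    .of_equiv (Algebra.IsPushout.out (R := K) (S := MvPolynomial σ K) (R' := L)
      (S' := MvPolynomial σ L)).equiv
  exact isWeaklyRegular_of_map _ (fun n =>
    (Ideal.comap_map_eq_self_of_faithfullyFlat (B := MvPolynomial σ L) _).le) h

open MvPolynomial in
theorem isWeaklyRegular_ofFn_X (A : Type*) [CommRing A] (n : ℕ) :
    IsWeaklyRegular (MvPolynomial (Fin n) A)
      (List.ofFn fun i : Fin n => (X i : MvPolynomial (Fin n) A)) := by
  refine isWeaklyRegular_self_iff.2 fun k hk u hu => ?_
  have htake : Ideal.ofList ((List.ofFn fun i : Fin n => (X i : MvPolynomial (Fin n) A)).take k) =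
      Ideal.span (X '' {i : Fin n | (i : ℕ) < k}) := by
    rw [Ideal.ofList]
    congr 1
    ext p
    simp only [List.mem_take_iff_getElem, List.getElem_ofFn, Set.mem_ofPred_eq]
    constructor
    · rintro ⟨j, hj, rfl⟩
      exact ⟨_, hj.trans_le (min_le_left _ _), rfl⟩
    · rintro ⟨i, hi, rfl⟩
      exact ⟨i, by simpa using hi, rfl⟩
  rw [htake, mem_ideal_span_X_image] at hu ⊢
  rw [List.length_ofFn] at hk
  rw [List.getElem_ofFn] at hu
  intro m hm
  obtain ⟨i, hi, hmi⟩ := hu (Finsupp.single ⟨k, hk⟩ 1 + m) (by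
    simpa [mem_support_iff, coeff_X_mul] using hm)
  refine ⟨i, hi, fun h => hmi ?_⟩
  rw [Finsupp.add_apply, h, Finsupp.single_eq_of_ne]
  rintro rfl
  simp at hi

end WeaklyRegular

section Graded

open MvPolynomial RingTheory.Sequence
open IsLocalRing (maximalIdeal le_maximalIdeal)

attribute [local instance] MvPolynomial.gradedAlgebra

theorem idealOfVars_eq_ker_constantCoeff (σ R : Type*) [CommRing R] :
    idealOfVars σ R = RingHom.ker (constantCoeff (σ := σ) (R := R)) := by
  ext p
  rw [← pow_one (idealOfVars σ R), mem_pow_idealOfVars_iff']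
  simp [RingHom.mem_ker, constantCoeff_eq, Finsupp.degree_eq_zero_iff]

theorem isPrime_idealOfVars (σ R : Type*) [CommRing R] [IsDomain R] : (idealOfVars σ R).IsPrime :=
  idealOfVars_eq_ker_constantCoeff σ R ▸ RingHom.ker_isPrime _

-- If `s` has constant term `1`, then `w = 1 - s` satisfies `u ≡ w ^ (n + 1) * u` modulo `I`,
-- and the right-hand side has no component of degree `n`.
theorem mem_of_mul_mem_of_isUnit_constantCoeff {σ R : Type*} [CommRing R]
    {I : Ideal (MvPolynomial σ R)} (hI : I.IsHomogeneous (homogeneousSubmodule σ R))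
    {s u : MvPolynomial σ R} (hs : IsUnit (constantCoeff s)) (hsu : s * u ∈ I) : u ∈ I := by
  obtain ⟨c, hc⟩ := hs.exists_left_inv
  have hw : 1 - C c * s ∈ idealOfVars σ R := by
    rw [idealOfVars_eq_ker_constantCoeff, RingHom.mem_ker]
    simp [hc]
  set w := 1 - C c * s with hw_def
  refine hI.mem_iff.2 fun n => ?_
  have hcongr : u - w ^ (n + 1) * u ∈ I := by
    obtain ⟨t, ht⟩ := one_sub_dvd_one_sub_pow w (n + 1)
    have : u - w ^ (n + 1) * u = C c * t * (s * u) := by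
      linear_combination u * ht + t * u * hw_def
    exact this ▸ I.mul_mem_left _ hsu
  have hvanish : homogeneousComponent n (w ^ (n + 1) * u) = 0 := by
    have := (mem_pow_idealOfVars_iff' (n + 1) _).1
      (Ideal.mul_mem_right u _ (Ideal.pow_mem_pow hw (n + 1)))
    ext m
    rw [coeff_homogeneousComponent]
    split_ifs with hm
    · exact this m (by omega)
    · rfl
  have hdecompose (p : MvPolynomial σ R) :
      (DirectSum.decompose (homogeneousSubmodule σ R) p n : MvPolynomial σ R) =
        homogeneousComponent n p :=
    decomposition.decompose'_apply p n
  simpa only [hdecompose, map_sub, hvanish, sub_zero] using hI n hcongr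

theorem isHomogeneous_ofList {σ R : Type*} [CommRing R] {fs : List (MvPolynomial σ R)}
    (hfs : ∀ f ∈ fs, ∃ d, f.IsHomogeneous d) :
    (Ideal.ofList fs).IsHomogeneous (homogeneousSubmodule σ R) :=
  Ideal.homogeneous_span _ _ hfs

theorem isWeaklyRegular_of_map_localization {σ K : Type*} [Field K]
    [(idealOfVars σ K).IsPrime] (S : Type*) [CommRing S] [Algebra (MvPolynomial σ K) S]
    [IsLocalization.AtPrime S (idealOfVars σ K)] {fs : List (MvPolynomial σ K)}
    (hfs : ∀ f ∈ fs, ∃ d, f.IsHomogeneous d)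
    (h : IsWeaklyRegular S (fs.map (algebraMap (MvPolynomial σ K) S))) :
    IsWeaklyRegular (MvPolynomial σ K) fs := by
  refine isWeaklyRegular_of_map _ (fun n u hu => ?_) h
  rw [Ideal.mem_comap,
    IsLocalization.algebraMap_mem_map_algebraMap_iff (idealOfVars σ K).primeCompl] at hu
  obtain ⟨s, hs, hsu⟩ := hu
  refine mem_of_mul_mem_of_isUnit_constantCoeff
    (isHomogeneous_ofList fun f hf => hfs f (List.mem_of_mem_take hf)) ?_ hsu
  rwa [Ideal.mem_primeCompl_iff, idealOfVars_eq_ker_constantCoeff, RingHom.mem_ker,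
    ← ne_eq, ← isUnit_iff_ne_zero] at hs

theorem isWeaklyRegular_of_X_mem_radical {K : Type*} [Field K] {n : ℕ}
    {fs : List (MvPolynomial (Fin n) K)} (hlen : fs.length = n)
    (hfs : ∀ f ∈ fs, ∃ d ≠ 0, f.IsHomogeneous d)
    (hrad : ∀ i, X i ∈ (Ideal.ofList fs).radical) :
    IsWeaklyRegular (MvPolynomial (Fin n) K) fs := by
  have := isPrime_idealOfVars (Fin n) K
  let S := Localization.AtPrime (idealOfVars (Fin n) K)
  have hmap {f : MvPolynomial (Fin n) K} (hf : f ∈ idealOfVars (Fin n) K) :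
      algebraMap _ S f ∈ maximalIdeal S := by
    rw [← Localization.AtPrime.map_eq_maximalIdeal]
    exact Ideal.mem_map_of_mem _ hf
  have hX : ∀ f ∈ List.ofFn fun i : Fin n => (X i : MvPolynomial (Fin n) K),
      f ∈ idealOfVars (Fin n) K := by
    simp only [List.mem_ofFn', Set.forall_mem_range]
    exact fun i => Ideal.subset_span ⟨i, rfl⟩
  refine isWeaklyRegular_of_map_localization S
    (fun f hf => (hfs f hf).imp fun _ h => h.2) (isWeaklyRegular_of_exists_isRegular ?_ ?_
      ⟨_, by simp [hlen], ?_, (isWeaklyRegular_ofFn_X K n).isRegular_of_isLocalization_of_mem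
        S _ hX⟩)
  · refine List.forall_mem_map.2 fun f hf => hmap ?_
    obtain ⟨d, hd0, hd⟩ := hfs f hf
    rw [idealOfVars_eq_ker_constantCoeff, RingHom.mem_ker, constantCoeff_eq]
    exact hd.coeff_eq_zero (by simpa using hd0.symm)
  · rintro p ⟨-, hp⟩
    have hle : Ideal.ofList fs ≤ p.asIdeal.comap (algebraMap _ S) :=
      Ideal.span_le.2 fun f hf => hp (List.mem_map_of_mem hf)
    have hle : (Ideal.ofList fs).radical ≤ p.asIdeal.comap (algebraMap _ S) :=
      (p.isPrime.comap _).radical_le_iff.2 hle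
    have hle : maximalIdeal S ≤ p.asIdeal := by
      rw [← Localization.AtPrime.map_eq_maximalIdeal, Ideal.map_le_iff_le_comap]
      exact Ideal.span_le.2 (Set.range_subset_iff.2 fun i => hle (hrad i))
    exact PrimeSpectrum.ext ((le_maximalIdeal p.isPrime.ne_top).antisymm hle)
  · exact List.forall_mem_map.2 fun f hf => hmap (hX f hf)

end Graded

section ProjectiveZeros

open MvPolynomial RingTheory.Sequence

theorem eval_smul_of_isHomogeneous {σ R : Type*} [CommSemiring R] {F : MvPolynomial σ R} {d : ℕ}
    (hF : F.IsHomogeneous d) (a : R) (v : σ → R) : eval (a • v) F = a ^ d * eval v F := by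
  rw [eval_eq, eval_eq, Finset.mul_sum]
  refine Finset.sum_congr rfl fun m hm => ?_
  have hdeg : ∑ i ∈ m.support, m i = d := by
    simpa [Finsupp.weight_apply, Finsupp.sum] using hF (mem_support_iff.1 hm)
  simp only [Pi.smul_apply, smul_eq_mul, mul_pow, Finset.prod_mul_distrib,
    Finset.prod_pow_eq_pow_sum, hdeg]
  ring

theorem exists_isHomogeneous_one_forall_eval_ne_zero {k σ ι : Type*} [Field k] [Infinite k]
    [Finite σ] [Finite ι] (v : ι → σ → k) (hv : ∀ i, v i ≠ 0) :
    ∃ l : MvPolynomial σ k, l.IsHomogeneous 1 ∧ ∀ i, eval (v i) l ≠ 0 := by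
  classical
  have := Fintype.ofFinite σ
  obtain ⟨φ, hφ⟩ := Module.exists_dual_forall_apply_ne_zero (K := k) v hv
  refine ⟨∑ j, C (φ fun j' => if j = j' then 1 else 0) * X j,
    .sum _ _ _ fun j _ => isHomogeneous_C_mul_X _ _, fun i => ?_⟩
  convert hφ i
  rw [LinearMap.pi_apply_eq_sum_univ φ (v i)]
  simp [mul_comm]

theorem X_mem_radical_of_forall_exists_eval_rep_ne_zero {k σ : Type*} [Field k] [IsAlgClosed k]
    [Finite σ] {s : Set (MvPolynomial σ k)} (hs : ∀ f ∈ s, ∃ d, f.IsHomogeneous d)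
    (hzero : ∀ P : Projectivization k (σ → k), ∃ f ∈ s, eval P.rep f ≠ 0) (i : σ) :
    X i ∈ (Ideal.span s).radical := by
  rw [← vanishingIdeal_zeroLocus_eq_radical (K := k), mem_vanishingIdeal_iff]
  intro v hv
  rw [zeroLocus_span] at hv
  suffices hv0 : v = 0 by simp [hv0]
  by_contra hv0
  obtain ⟨f, hfs, hf⟩ := hzero (.mk k v hv0)
  obtain ⟨a, ha⟩ := Projectivization.exists_smul_eq_mk_rep k v hv0
  obtain ⟨d, hd⟩ := hs f hfs
  have hfv : eval v f = 0 := by simpa using hv f hfs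
  rw [← ha, Units.smul_def, eval_smul_of_isHomogeneous hd, hfv, mul_zero] at hf
  exact hf rfl

-- A linear form avoiding the finitely many common zeros leaves only the origin as a common zero.
theorem isWeaklyRegular_of_finite_projective_zeros {k : Type*} [Field k] [IsAlgClosed k] {n : ℕ}
    {fs : List (MvPolynomial (Fin (n + 1)) k)} (hlen : fs.length = n)
    (hfs : ∀ f ∈ fs, ∃ d ≠ 0, f.IsHomogeneous d)
    (hfin : {P : Projectivization k (Fin (n + 1) → k) | ∀ f ∈ fs, eval P.rep f = 0}.Finite) :
    IsWeaklyRegular (MvPolynomial (Fin (n + 1)) k) fs := by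
  have := hfin.to_subtype
  obtain ⟨l, hl, hlP⟩ := exists_isHomogeneous_one_forall_eval_ne_zero
    (fun P : {P : Projectivization k (Fin (n + 1) → k) | ∀ f ∈ fs, eval P.rep f = 0} => P.1.rep)
    fun P => P.1.rep_nonzero
  have hfsl : ∀ f ∈ fs ++ [l], ∃ d ≠ 0, f.IsHomogeneous d :=
    List.forall_mem_append.2 ⟨hfs, List.forall_mem_singleton.2 ⟨1, one_ne_zero, hl⟩⟩
  have hreg := isWeaklyRegular_of_X_mem_radical (by simp [hlen]) hfsl
    (X_mem_radical_of_forall_exists_eval_rep_ne_zero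
      (fun f hf => (hfsl f hf).imp fun _ h => h.2) fun P => ?_)
  · exact ((isWeaklyRegular_append_iff _ _ _).1 hreg).1
  · by_contra! hP
    exact hlP ⟨P, fun f hf => hP f (by simp [hf])⟩ (hP l (by simp))

theorem isWeaklyRegular_ofFn_of_finite_projective_zeros {K : Type*} [Field K] {n d : ℕ}
    (hd : d ≠ 0) {f : Fin n → MvPolynomial (Fin (n + 1)) K} (hf : ∀ j, (f j).IsHomogeneous d)
    (hfin : {P : Projectivization (AlgebraicClosure K) (Fin (n + 1) → AlgebraicClosure K) |
      ∀ j, eval P.rep (map (algebraMap K (AlgebraicClosure K)) (f j)) = 0}.Finite) :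
    IsWeaklyRegular (MvPolynomial (Fin (n + 1)) K) (List.ofFn f) := by
  refine isWeaklyRegular_of_map_algebraMap K (L := AlgebraicClosure K)
    (isWeaklyRegular_of_finite_projective_zeros (by simp) ?_ ?_)
  · rw [List.forall_mem_map, List.forall_mem_ofFn_iff]
    exact fun j => ⟨d, hd, (hf j).map _⟩
  · simpa only [List.forall_mem_map, List.forall_mem_ofFn_iff] using hfin

end ProjectiveZeros

section HilbertFunction

open Module RingTheory.Sequence

theorem finrank_quotient_submoduleOf_sup_map {K E F : Type*} [Field K] [AddCommGroup E]
    [Module K E] [AddCommGroup F] [Module K F] (φ : E →ₗ[K] F) {A B : Submodule K E}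
    {W : Submodule K F} (hB : ∀ a ∈ A, φ a ∈ W ↔ a ∈ B) :
    finrank K (↥(W ⊔ A.map φ) ⧸ W.submoduleOf (W ⊔ A.map φ)) =
      finrank K (A ⧸ B.submoduleOf A) := by
  let ψ : A →ₗ[K] ↥(W ⊔ A.map φ) ⧸ W.submoduleOf (W ⊔ A.map φ) :=
    (W.submoduleOf _).mkQ ∘ₗ
      (φ ∘ₗ A.subtype).codRestrict _ fun a => Submodule.mem_sup_right ⟨a, a.2, rfl⟩
  have hker : LinearMap.ker ψ = B.submoduleOf A := by
    ext a
    exact (Submodule.Quotient.mk_eq_zero _).trans (hB a a.2)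
  have hsurj : Function.Surjective ψ := by
    intro x
    obtain ⟨⟨y, hy⟩, rfl⟩ := Submodule.mkQ_surjective _ x
    obtain ⟨w, hw, -, ⟨a, ha, rfl⟩, rfl⟩ := Submodule.mem_sup.1 hy
    refine ⟨⟨a, ha⟩, (Submodule.Quotient.eq _).2 ?_⟩
    simpa [Submodule.submoduleOf] using hw
  rw [← hker]
  exact (ψ.quotKerEquivOfSurjective hsurj).finrank_eq.symm

theorem finrank_quotient_submoduleOf_add_finrank_inf {K E : Type*} [Field K] [AddCommGroup E]
    [Module K E] (V W : Submodule K E) [FiniteDimensional K V] :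
    finrank K (V ⧸ W.submoduleOf V) + finrank K ↥(V ⊓ W) = finrank K V := by
  rw [← Submodule.map_comap_subtype, Submodule.finrank_map_subtype_eq]
  exact Submodule.finrank_quotient_add_finrank _

section Graded

variable {K A : Type*} [Field K] [CommRing A] [Algebra K A] (𝒜 : ℕ → Submodule K A)

/-- The Hilbert function `n ↦ dim_K (A/I)_n` of a homogeneous ideal `I` of a graded `K`-algebra,
with values in `ℤ` so that its iterated differences can be taken. -/
noncomputable def hilbertFunction (I : Ideal A) (n : ℕ) : ℤ :=
  finrank K (𝒜 n ⧸ (I.restrictScalars K).submoduleOf (𝒜 n))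

variable [GradedAlgebra 𝒜] {𝒜} {I : Ideal A} {d : ℕ} {f : A}

theorem inf_sup_span_singleton_eq (hI : I.IsHomogeneous 𝒜) (hf : f ∈ 𝒜 d) (n : ℕ) :
    𝒜 (d + n) ⊓ (I ⊔ Ideal.span {f}).restrictScalars K =
      𝒜 (d + n) ⊓ I.restrictScalars K ⊔ (𝒜 n).map (LinearMap.mulLeft K f) := by
  apply le_antisymm
  · rintro u ⟨hu, huJ⟩
    obtain ⟨v, hv, fw, hfw, rfl⟩ := Submodule.mem_sup.1 huJ
    obtain ⟨w, rfl⟩ := Ideal.mem_span_singleton'.1 hfw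
    rw [← DirectSum.decompose_of_mem_same 𝒜 hu, DirectSum.decompose_add, DirectSum.add_apply,
      Submodule.coe_add, mul_comm w, DirectSum.coe_decompose_mul_add_of_left_mem 𝒜 hf]
    exact Submodule.add_mem_sup ⟨SetLike.coe_mem _, hI _ hv⟩ ⟨_, SetLike.coe_mem _, rfl⟩
  · refine sup_le (inf_le_inf_left _ fun u hu => Ideal.mem_sup_left hu) ?_
    rintro _ ⟨w, hw, rfl⟩
    exact ⟨SetLike.mul_mem_graded hf hw,
      Ideal.mem_sup_right (Ideal.mul_mem_right _ _ (Ideal.mem_span_singleton_self f))⟩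

theorem exists_forall_mem_sum_mul_eq_of_mem_span_range {ι : Type*} [Fintype ι] {f : ι → A}
    (hf : ∀ j, f j ∈ 𝒜 d) {n : ℕ} {g : A} (hg : g ∈ 𝒜 (d + n))
    (hspan : g ∈ Ideal.span (Set.range f)) :
    ∃ c : ι → A, (∀ j, c j ∈ 𝒜 n) ∧ ∑ j, f j * c j = g := by
  obtain ⟨c, rfl⟩ := Ideal.mem_span_range_iff_exists_fun.1 hspan
  refine ⟨fun j => DirectSum.decompose 𝒜 (c j) n, fun j => SetLike.coe_mem _, ?_⟩
  rw [← DirectSum.decompose_of_mem_same 𝒜 hg]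
  simp only [DirectSum.decompose_sum, DirectSum.sum_apply, AddSubmonoidClass.coe_finsetSum,
    mul_comm (c _), DirectSum.coe_decompose_mul_add_of_left_mem 𝒜 (hf _)]

variable [∀ n, FiniteDimensional K (𝒜 n)]

theorem hilbertFunction_sup_span_singleton (hI : I.IsHomogeneous 𝒜) (hf : f ∈ 𝒜 d)
    (hreg : ∀ u, f * u ∈ I → u ∈ I) (n : ℕ) :
    hilbertFunction 𝒜 (I ⊔ Ideal.span {f}) (n + d) = fwdDiff d (hilbertFunction 𝒜 I) n := by
  have hmul : finrank K (↥(𝒜 (d + n) ⊓ (I ⊔ Ideal.span {f}).restrictScalars K) ⧸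
      (𝒜 (d + n) ⊓ I.restrictScalars K).submoduleOf _) =
        finrank K (𝒜 n ⧸ (I.restrictScalars K).submoduleOf (𝒜 n)) := by
    rw [inf_sup_span_singleton_eq hI hf]
    exact finrank_quotient_submoduleOf_sup_map _ fun u hu =>
      ⟨fun h => hreg u h.2, fun h => ⟨SetLike.mul_mem_graded hf hu, I.mul_mem_left f h⟩⟩
  have hle : 𝒜 (d + n) ⊓ I.restrictScalars K ≤
      𝒜 (d + n) ⊓ (I ⊔ Ideal.span {f}).restrictScalars K :=
    inf_le_inf_left _ fun u hu => Ideal.mem_sup_left hu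
  have hI := finrank_quotient_submoduleOf_add_finrank_inf (𝒜 (d + n)) (I.restrictScalars K)
  have hJ := finrank_quotient_submoduleOf_add_finrank_inf (𝒜 (d + n))
    ((I ⊔ Ideal.span {f}).restrictScalars K)
  have hIJ := finrank_quotient_submoduleOf_add_finrank_inf
    (𝒜 (d + n) ⊓ (I ⊔ Ideal.span {f}).restrictScalars K) (𝒜 (d + n) ⊓ I.restrictScalars K)
  rw [inf_eq_right.2 hle] at hIJ
  rw [fwdDiff, add_comm n d]
  simp only [hilbertFunction]
  lia

theorem hilbertFunction_sup_ofList {fs : List A} (hI : I.IsHomogeneous 𝒜)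
    (hfs : ∀ f ∈ fs, f ∈ 𝒜 d) (hreg : IsWeaklyRegular (A ⧸ I) fs) (n : ℕ) :
    hilbertFunction 𝒜 (I ⊔ Ideal.ofList fs) (n + fs.length * d) =
      ((fwdDiff d)^[fs.length] (hilbertFunction 𝒜 I)) n := by
  induction fs generalizing I n with
  | nil => simp
  | cons f fs ih =>
    rw [List.forall_mem_cons] at hfs
    obtain ⟨hf, hreg⟩ := isWeaklyRegular_quotient_cons_iff.1 hreg
    have hIf : (I ⊔ Ideal.span {f}).IsHomogeneous 𝒜 :=
      hI.sup (Ideal.homogeneous_span _ _ (by simpa using ⟨d, hfs.1⟩))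
    rw [Ideal.ofList_cons, ← sup_assoc, List.length_cons, add_one_mul, add_comm _ d, ← add_assoc,
      ih hIf hfs.2 hreg, Function.iterate_succ_apply, ← fwdDiff_iter_comp_add]
    simp only [hilbertFunction_sup_span_singleton hI hfs.1 hf]

end Graded

theorem fwdDiff_eq_sum_fwdDiff_one {G : Type*} [AddCommGroup G] (d : ℕ) (f : ℕ → G) :
    fwdDiff d f = ∑ a ∈ Finset.range d, fun n => fwdDiff 1 f (n + a) := by
  ext n
  simpa [fwdDiff, add_assoc] using (Finset.sum_range_sub (fun a => f (n + a)) d).symm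

theorem fwdDiff_iter_eq_of_fwdDiff_one_iter_eq {k d : ℕ} {c : ℤ} {f : ℕ → ℤ}
    (hf : (fwdDiff 1)^[k] f = fun _ => c) : (fwdDiff d)^[k] f = fun _ => d ^ k * c := by
  induction k generalizing f with
  | zero => simpa using hf
  | succ k ih =>
    ext n
    rw [Function.iterate_succ_apply, fwdDiff_eq_sum_fwdDiff_one, fwdDiff_iter_finsetSum,
      Finset.sum_apply]
    simp only [fwdDiff_iter_comp_add, ih hf, Finset.sum_const, Finset.card_range, nsmul_eq_mul]
    ring

open MvPolynomial

instance finiteDimensional_homogeneousSubmodule {σ K : Type*} [Finite σ] [Field K] (n : ℕ) :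
    FiniteDimensional K (homogeneousSubmodule σ K n) :=
  Module.Finite.iff_fg.2 (homogeneousSubmodule_fg σ K n)

variable {K : Type*} [Field K] {q d : ℕ}

theorem finrank_homogeneousSubmodule (q n : ℕ) :
    finrank K (homogeneousSubmodule (Fin (q + 1)) K n) = (n + q).choose q := by
  have hs : {m : Fin (q + 1) →₀ ℕ | m.degree = n} =
      ↑((Finset.univ : Finset (Fin (q + 1))).finsuppAntidiag n) := by
    ext m
    simp [Finset.mem_finsuppAntidiag, Finsupp.degree_eq_sum]
  rw [homogeneousSubmodule_eq_finsupp_supported,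
    (AddMonoidAlgebra.supportedEquivFinsupp _).finrank_eq, hs, finrank_finsupp_self,
    ← Nat.card_eq_fintype_card, Nat.card_coe_set_eq, Set.ncard_coe_finset,
    Finset.card_finsuppAntidiag_nat_eq_choose, Finset.card_fin, Nat.add_right_comm,
    Nat.add_sub_cancel, add_comm q n, Nat.choose_symm_add]

theorem hilbertFunction_bot (q : ℕ) :
    hilbertFunction (homogeneousSubmodule (Fin (q + 1)) K) ⊥ =
      fun n => ((n + q).choose q : ℤ) := by
  ext n
  have h := finrank_quotient_submoduleOf_add_finrank_inf
    (homogeneousSubmodule (Fin (q + 1)) K n) ⊥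
  rw [inf_bot_eq, finrank_bot, add_zero, finrank_homogeneousSubmodule] at h
  exact congrArg Nat.cast h

attribute [local instance] gradedAlgebra in
theorem hilbertFunction_span_range_eq_pow {γ : Fin q → MvPolynomial (Fin (q + 1)) K}
    (hγ : ∀ j, (γ j).IsHomogeneous d)
    (hreg : IsWeaklyRegular (MvPolynomial (Fin (q + 1)) K) (List.ofFn γ)) {n : ℕ}
    (hn : q * d ≤ n) :
    hilbertFunction (homogeneousSubmodule (Fin (q + 1)) K) (Ideal.span (Set.range γ)) n =
      d ^ q := by
  have hdiff : (fwdDiff 1)^[q] (fun n : ℕ => ((n + q).choose q : ℤ)) = fun _ => 1 := by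
    ext n
    refine (fwdDiff_iter_comp_add 1 (fun m : ℕ => (m.choose (q + 0) : ℤ)) q q n).trans ?_
    rw [fwdDiff_iter_choose]
    simp
  have hspan : Ideal.span (Set.range γ) = ⊥ ⊔ Ideal.ofList (List.ofFn γ) := by
    simp [Ideal.ofList, List.mem_ofFn, Set.range]
  obtain ⟨m, rfl⟩ := Nat.exists_eq_add_of_le' hn
  have hiter := hilbertFunction_sup_ofList (d := d) (𝒜 := homogeneousSubmodule (Fin (q + 1)) K)
    (Ideal.IsHomogeneous.bot _) (by simpa [List.mem_ofFn] using hγ)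
    (isWeaklyRegular_quotient_bot_iff.2 hreg) m
  rw [List.length_ofFn] at hiter
  rw [hspan, hiter, hilbertFunction_bot, fwdDiff_iter_eq_of_fwdDiff_one_iter_eq hdiff, mul_one]

end HilbertFunction

section LexMonomials

open RingTheory.Sequence

variable {R : Type*} [CommRing R]

/-- The ideal generated by the monomials `∏ j, f j ^ e j` with `e` lexicographically larger
than `i`. -/
def lexAboveIdeal {n : ℕ} (f : Fin n → R) (i : Fin n → ℕ) : Ideal R :=
  Ideal.span ((fun e => ∏ j, f j ^ e j) '' {e | toLex i < toLex e})

theorem toLex_lt_toLex_iff_zero_tail {n : ℕ} {i e : Fin (n + 1) → ℕ} :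
    toLex i < toLex e ↔
      i 0 < e 0 ∨ i 0 = e 0 ∧ toLex (Fin.tail i) < toLex (Fin.tail e) := by
  nth_rw 1 [← Fin.cons_self_tail i, ← Fin.cons_self_tail e]
  exact Fin.pi_lex_lt_cons_cons _

theorem lexAboveIdeal_succ_le {n : ℕ} (f : Fin (n + 1) → R) (i : Fin (n + 1) → ℕ) :
    lexAboveIdeal f i ≤ Ideal.span {f 0 ^ i 0} *
      (Ideal.span {f 0} ⊔ lexAboveIdeal (Fin.tail f) (Fin.tail i)) := by
  refine Ideal.span_le.2 ?_
  rintro _ ⟨e, he, rfl⟩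
  simp only [SetLike.mem_coe, Ideal.mem_span_singleton_mul, Fin.prod_univ_succ]
  rcases toLex_lt_toLex_iff_zero_tail.1 he with hlt | ⟨heq, htail⟩
  · obtain ⟨k, hk⟩ := Nat.exists_eq_add_of_lt hlt
    exact ⟨f 0 * (f 0 ^ k * ∏ j : Fin n, f j.succ ^ e j.succ),
      Ideal.mem_sup_left (Ideal.mul_mem_right _ _ (Ideal.mem_span_singleton_self _)),
      by rw [hk]; ring⟩
  · exact ⟨_, Ideal.mem_sup_right (Ideal.subset_span ⟨_, htail, rfl⟩), by rw [heq]; rfl⟩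

theorem mem_of_pow_mul_mem {I : Ideal R} {f : R} (hf : ∀ u, f * u ∈ I → u ∈ I) {k : ℕ} {u : R}
    (hu : f ^ k * u ∈ I) : u ∈ I := by
  induction k with
  | zero => simpa using hu
  | succ k ih => exact ih (hf _ (by rwa [← mul_assoc, ← pow_succ']))

theorem mem_sup_span_range_of_prod_pow_mul_mem {n : ℕ} {I : Ideal R} {f : Fin n → R}
    (hf : IsWeaklyRegular (R ⧸ I) (List.ofFn f)) {i : Fin n → ℕ} {g : R}
    (hg : (∏ j, f j ^ i j) * g ∈ I ⊔ lexAboveIdeal f i) : g ∈ I ⊔ Ideal.span (Set.range f) := by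
  induction n generalizing I with
  | zero =>
    have : {e : Fin 0 → ℕ | toLex i < toLex e} = ∅ :=
      Set.eq_empty_of_forall_notMem fun e (he : toLex i < toLex e) => he.ne (Subsingleton.elim _ _)
    simpa [lexAboveIdeal, this] using hg
  | succ n ih =>
    rw [List.ofFn_succ, isWeaklyRegular_quotient_cons_iff] at hf
    obtain ⟨a, ha, b, hb, hab⟩ := Submodule.mem_sup.1
      (sup_le_sup_left (lexAboveIdeal_succ_le f i) I hg)
    obtain ⟨c, hc, rfl⟩ := Ideal.mem_span_singleton_mul.1 hb
    rw [Fin.prod_univ_succ] at hab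
    have hcI : (∏ j : Fin n, f j.succ ^ i j.succ) * g - c ∈ I := by
      refine mem_of_pow_mul_mem hf.1 (k := i 0) ?_
      rwa [show f 0 ^ i 0 * ((∏ j : Fin n, f j.succ ^ i j.succ) * g - c) = a by
        linear_combination -hab]
    have htail : g ∈ I ⊔ Ideal.span {f 0} ⊔ Ideal.span (Set.range (Fin.tail f)) := by
      refine ih hf.2 (i := Fin.tail i) ?_
      rw [sup_assoc, ← sub_add_cancel (_ * g) c]
      exact Submodule.add_mem_sup hcI hc
    rwa [sup_assoc, ← Ideal.span_union, Set.singleton_union, ← Fin.range_cons,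
      Fin.cons_self_tail] at htail

end LexMonomials

section LexFiltration

open RingTheory.Sequence MvPolynomial

theorem lexSucc_le_iff {q : ℕ} (hq : 1 ≤ q) {i e : Fin q → ℕ} :
    toLex (lexSucc q hq i) ≤ toLex e ↔ toLex i < toLex e := by
  refine ⟨(Pi.lt_toLex_update_self_iff.2 (Nat.lt_succ_self _)).trans_le, ?_⟩
  rintro ⟨k, heq : ∀ j < k, i j = e j, hlt : i k < e k⟩
  have hle (j : Fin q) : j ≤ ⟨q - 1, by omega⟩ := Nat.le_sub_one_of_lt j.2
  rcases (hle k).eq_or_lt with hk | hk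
  · exact Pi.toLex_monotone (update_le_iff.2
      ⟨hk ▸ hlt, fun j hj => (heq j (hk ▸ (hle j).lt_of_ne hj)).le⟩)
  · have hsucc : ∀ j ≤ k, lexSucc q hq i j = i j := fun j hj =>
      Function.update_of_ne (hj.trans_lt hk).ne _ _
    exact le_of_lt ⟨k, fun j hj => (hsucc j hj.le).trans (heq j hj), (hsucc k le_rfl).trans_lt hlt⟩

variable {K : Type} [Field K] {q d N : ℕ} {γ : Fin q → MvPolynomial (Fin (q + 1)) K}
  {i : Fin q → ℕ}

theorem prod_pow_mul_mem_filtW {e : Fin q → ℕ} (hie : toLex i ≤ toLex e)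
    (he : d * ∑ j, e j ≤ N) {g : MvPolynomial (Fin (q + 1)) K}
    (hg : g.IsHomogeneous (N - d * ∑ j, e j)) :
    (∏ j, γ j ^ e j) * g ∈ filtW K q d N γ i :=
  (le_iSup_of_le e <| le_iSup_of_le hie <| le_iSup_of_le he le_rfl :
    (homogeneousSubmodule _ K _).map (LinearMap.mulLeft K _) ≤ filtW K q d N γ i) ⟨g, hg, rfl⟩

theorem filtW_le_iff {S : Submodule K (MvPolynomial (Fin (q + 1)) K)} :
    filtW K q d N γ i ≤ S ↔ ∀ e : Fin q → ℕ, toLex i ≤ toLex e → d * ∑ j, e j ≤ N →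
      ∀ g : MvPolynomial (Fin (q + 1)) K, g.IsHomogeneous (N - d * ∑ j, e j) →
        (∏ j, γ j ^ e j) * g ∈ S := by
  simp only [filtW, iSup_le_iff, Submodule.map_le_iff_le_comap]
  rfl

theorem filtW_eq_sup (hq : 1 ≤ q) (hi : d * ∑ j, i j ≤ N) :
    filtW K q d N γ i = filtW K q d N γ (lexSucc q hq i) ⊔
      (homogeneousSubmodule (Fin (q + 1)) K (N - d * ∑ j, i j)).map
        (LinearMap.mulLeft K (∏ j, γ j ^ i j)) := by
  refine le_antisymm (filtW_le_iff.2 fun e hie he g hg => ?_) (sup_le ?_ ?_)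
  · rcases hie.eq_or_lt with hie | hie
    · obtain rfl := toLex_inj.1 hie
      exact Submodule.mem_sup_right ⟨g, hg, rfl⟩
    · exact Submodule.mem_sup_left (prod_pow_mul_mem_filtW ((lexSucc_le_iff hq).2 hie) he hg)
  · exact filtW_le_iff.2 fun e hie he g hg =>
      prod_pow_mul_mem_filtW ((lexSucc_le_iff hq).1 hie).le he hg
  · rintro _ ⟨g, hg, rfl⟩
    exact prod_pow_mul_mem_filtW le_rfl hi hg

theorem filtW_lexSucc_le_lexAboveIdeal (hq : 1 ≤ q) :
    filtW K q d N γ (lexSucc q hq i) ≤ (lexAboveIdeal γ i).restrictScalars K :=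
  filtW_le_iff.2 fun e hie _ _ _ =>
    Ideal.mul_mem_right _ _ (Ideal.subset_span ⟨e, (lexSucc_le_iff hq).1 hie, rfl⟩)

theorem prod_pow_mul_mul_mem_filtW_lexSucc (hq : 1 ≤ q) (hi : d * ∑ j, i j + d ≤ N) (j : Fin q)
    {c : MvPolynomial (Fin (q + 1)) K} (hc : c.IsHomogeneous (N - (d * ∑ j, i j + d))) :
    (∏ k, γ k ^ i k) * (γ j * c) ∈ filtW K q d N γ (lexSucc q hq i) := by
  have hprod : ∏ k, γ k ^ (i + Pi.single j 1 : Fin q → ℕ) k = (∏ k, γ k ^ i k) * γ j := by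
    simp only [Pi.add_apply, pow_add, Finset.prod_mul_distrib, Pi.single_apply, pow_ite, pow_one,
      pow_zero, Finset.prod_ite_eq', Finset.mem_univ, if_true]
  have hsum : d * ∑ k, (i + Pi.single j 1 : Fin q → ℕ) k = d * ∑ k, i k + d := by
    simp [Finset.sum_add_distrib, mul_add]
  have hlt : toLex i < toLex (i + Pi.single j 1) :=
    Pi.toLex_strictMono (lt_add_of_pos_right i (Pi.single_pos.2 one_pos))
  rw [← mul_assoc, ← hprod]
  exact prod_pow_mul_mem_filtW ((lexSucc_le_iff hq).2 hlt) (hsum ▸ hi) (hsum ▸ hc)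

attribute [local instance] gradedAlgebra in
theorem prod_pow_mul_mem_filtW_lexSucc_iff (hq : 1 ≤ q) (hγ : ∀ j, (γ j).IsHomogeneous d)
    (hreg : IsWeaklyRegular (MvPolynomial (Fin (q + 1)) K) (List.ofFn γ))
    (hi : d * ∑ j, i j + d ≤ N) {g : MvPolynomial (Fin (q + 1)) K}
    (hg : g.IsHomogeneous (N - d * ∑ j, i j)) :
    (∏ j, γ j ^ i j) * g ∈ filtW K q d N γ (lexSucc q hq i) ↔ g ∈ Ideal.span (Set.range γ) := by
  constructor
  · intro h
    have hreg' := isWeaklyRegular_quotient_bot_iff.2 hreg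
    simpa using mem_sup_span_range_of_prod_pow_mul_mem hreg'
      (Ideal.mem_sup_right (filtW_lexSucc_le_lexAboveIdeal hq h))
  · intro h
    rw [show N - d * ∑ j, i j = d + (N - (d * ∑ j, i j + d)) by omega] at hg
    obtain ⟨c, hc, rfl⟩ := exists_forall_mem_sum_mul_eq_of_mem_span_range
      (𝒜 := homogeneousSubmodule (Fin (q + 1)) K) hγ hg h
    rw [Finset.mul_sum]
    exact Submodule.sum_mem _ fun j _ => prod_pow_mul_mul_mem_filtW_lexSucc hq hi j (hc j)

end LexFiltration

theorem filtration_quotient_dim_general (K : Type) [Field K]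
    (q d : ℕ) (hq : 1 ≤ q) (hd : 1 ≤ d)
    (γ : Fin q → MvPolynomial (Fin (q + 1)) K)
    (hhom : ∀ j, (γ j).IsHomogeneous d)
    (hfin : {P : Projectivization (AlgebraicClosure K) (Fin (q + 1) → AlgebraicClosure K) |
        ∀ j, MvPolynomial.eval P.rep
          (MvPolynomial.map (algebraMap K (AlgebraicClosure K)) (γ j)) = 0}.Finite) :
    ∃ N₀ : ℕ, ∀ N : ℕ, N₀ < N → ∀ i : Fin q → ℕ, d * (∑ j, i j) + N₀ < N →
      Module.finrank K
        (↥(filtW K q d N γ i) ⧸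
          Submodule.comap (filtW K q d N γ i).subtype (filtW K q d N γ (lexSucc q hq i)))
        = d ^ q := by
  have hreg := isWeaklyRegular_ofFn_of_finite_projective_zeros (by omega) hhom hfin
  refine ⟨q * d, fun N _ i hi => ?_⟩
  have hqd : d ≤ q * d := Nat.le_mul_of_pos_left d hq
  have hdim := hilbertFunction_span_range_eq_pow hhom hreg
    (show q * d ≤ N - d * ∑ j, i j by omega)
  rw [hilbertFunction] at hdim
  rw [filtW_eq_sup hq (by omega)]
  refine (finrank_quotient_submoduleOf_sup_map
    (B := (Ideal.span (Set.range γ)).restrictScalars K) _ fun g hg =>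
      prod_pow_mul_mem_filtW_lexSucc_iff hq hhom hreg (by omega) hg).trans ?_
  exact_mod_cast hdim

/-- Let `γ_1,…,γ_q` be homogeneous polynomials of degree `d` in
`K[X_0,…,X_q]` (`K` a number field or `ℂ`) whose common zero locus in `ℙ^q(K̄)` is
finite.  Then there exists `N₀`, depending only on `γ_1,…,γ_q`, such that for all
`N > N₀` and all tuples `i⃗` with `d·σ(i⃗) < N − N₀`, the quotient `W_{i⃗}/W_{i⃗'}` has
dimension `d^q`, where `i⃗'` is the immediate lexicographic successor of `i⃗`. -/
theorem filtration_quotient_dim (K : Type) [Field K]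
    (hK : NumberField K ∨ Nonempty (K ≃+* ℂ))
    (q d : ℕ) (hq : 1 ≤ q) (hd : 1 ≤ d)
    (γ : Fin q → MvPolynomial (Fin (q + 1)) K)
    (hhom : ∀ j, (γ j).IsHomogeneous d)
    (hfin : {P : Projectivization (AlgebraicClosure K) (Fin (q + 1) → AlgebraicClosure K) |
        ∀ j, MvPolynomial.eval P.rep
          (MvPolynomial.map (algebraMap K (AlgebraicClosure K)) (γ j)) = 0}.Finite) :
    ∃ N₀ : ℕ, ∀ N : ℕ, N₀ < N → ∀ i : Fin q → ℕ, d * (∑ j, i j) + N₀ < N →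
      Module.finrank K
        (↥(filtW K q d N γ i) ⧸
          Submodule.comap (filtW K q d N γ i).subtype (filtW K q d N γ (lexSucc q hq i)))
        = d ^ q :=
  filtration_quotient_dim_general K q d hq hd γ hhom hfin
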